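/- Under hypothesis (1.0), assume μ(0,D) < ∞ and δ := sup_{x∈(0,D)} ν(0,x)·μ(x,D) < ∞, and set φ(x) = ν(0,x). Then the DN principal eigenvalue satisfies δ^{-1} ≥ (δ₁')^{-1} ≥ λ₀ ≥ δ₁^{-1} ≥ (4δ)^{-1}, where δ₁ = sup_{x∈(0,D)} [ (1/√(φ(x))) ∫₀ˣ φ^{3/2} dμ + √(φ(x)) ∫ₓ^D √φ dμ ] = sup_{x∈(0,D)} (1/√(φ(x))) ∫₀^D φ(x∧·) √φ dμ and δ₁' = sup_{x∈(0,D)} (1/φ(x)) ∫₀^D φ(·∧x)² dμ; moreover δ ≤ δ₁' ≤ 2δ. -/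

import Mathlib

/-!
All estimates rest on two facts: `φ` is an increasing primitive of `e^{-C}` with
`0 < φ < ∞` on `(0, D)`, so `∫ φ^{α-1} dν` telescopes (`lintegral_phi_pow`), and Tonelli's theorem
over the triangle `s < u` (`tonelli`), which turns a `μ`-integral of `∫_0^u κ dν` into
`∫ κ(s) μ(s, D) ν(ds)`.

* `δ ≤ δ₁'`: keep only the part `u > x` of the integral defining `δ₁'`.
* `δ₁' ≤ 2δ`: write `φ(u ∧ x)² = ∫_0^{u ∧ x} 2 φ dν`, exchange the integrals, and use
  `φ(s) μ(s, D) ≤ δ`.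
* `δ₁ ≤ 4δ`: write `φ(x ∧ u) √φ(u)` as `∫_0^u κ dν`, exchange the integrals, and use
  `μ(s, D) ≤ δ / φ(s)`; the two remaining integrals are at most `3 δ √φ(x)` and `δ √φ(x)`.
* `δ₁⁻¹ ≤ λ₀` (`muL2_le`): with `G(s) = ∫_s^D √φ dμ`, Cauchy–Schwarz gives
  `f(u)² ≤ (∫_0^u e^C f'² / G) h(u)` where `h(u) = ∫_0^u G dν = ∫ φ(u ∧ ·) √φ dμ ≤ δ₁ √φ(u)`.
  Integrating against `μ` and exchanging the integrals produces the factor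
  `(∫_s^D h dμ) / G(s) ≤ δ₁`, hence `μ(f²) ≤ δ₁ D(f)`.
* `λ₀ ≤ δ₁'⁻¹` (`lam_mul_le`, `lam_le`): the natural test function `φ(· ∧ x)` is not `C¹`. It is
  replaced by `∫_0 e^{-C} χ` for a continuous cutoff `χ` falling from `1` at `x` to `0` at `y > x`;
  this has energy at most `φ(y)` and dominates `φ(· ∧ x)`. Then `y ↓ x`.
-/

open MeasureTheory Set Filter Topology ENNReal

noncomputable section

/-- The open interval `(0, D)` in `ℝ`, where `D : ℝ≥0∞` may be infinite. -/
def ooI (D : ℝ≥0∞) : Set ℝ := {x : ℝ | 0 < x ∧ ENNReal.ofReal x < D}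

/-- The interval `[0, D)` in `ℝ`. -/
def coI (D : ℝ≥0∞) : Set ℝ := {x : ℝ | 0 ≤ x ∧ ENNReal.ofReal x < D}

/-- The interval `[0, D]` in `ℝ` (conventionally `[0, ∞)` when `D = ∞`). -/
def ccI (D : ℝ≥0∞) : Set ℝ := {x : ℝ | 0 ≤ x ∧ ENNReal.ofReal x ≤ D}

/-- `C(x) = ∫_0^x b(u)/a(u) du`. -/
def Cf (a b : ℝ → ℝ) (x : ℝ) : ℝ := ∫ u in Set.Ioo 0 x, b u / a u

/-- The measure `μ(dx) = (e^{C(x)}/a(x)) dx` on `(0, D)`. -/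
def muM (a b : ℝ → ℝ) (D : ℝ≥0∞) : Measure ℝ :=
  (volume.restrict (ooI D)).withDensity fun x => ENNReal.ofReal (Real.exp (Cf a b x) / a x)

/-- The measure `ν(dx) = e^{-C(x)} dx` on `(0, D)`. -/
def nuM (a b : ℝ → ℝ) (D : ℝ≥0∞) : Measure ℝ :=
  (volume.restrict (ooI D)).withDensity fun x => ENNReal.ofReal (Real.exp (-Cf a b x))

/-- Hypothesis (1.0): `a`, `b` Borel measurable, `a > 0` on `(0,D)`, and `b/a`, `e^C/a`
locally integrable on `[0, D]`. -/
def Hyp (a b : ℝ → ℝ) (D : ℝ≥0∞) : Prop :=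
  Measurable a ∧ Measurable b ∧ (∀ x ∈ ooI D, 0 < a x) ∧
    ∀ p : ℝ, 0 ≤ p → ENNReal.ofReal p ≤ D →
      IntegrableOn (fun u => b u / a u) (Set.Icc 0 p) ∧
      IntegrableOn (fun u => Real.exp (Cf a b u) / a u) (Set.Icc 0 p)

/-- `f ∈ C¹(0,D) ∩ C[0,D]`. -/
def C1C (D : ℝ≥0∞) (f : ℝ → ℝ) : Prop :=
  ContinuousOn f (ccI D) ∧ (∀ x ∈ ooI D, DifferentiableAt ℝ f x) ∧
    ContinuousOn (deriv f) (ooI D)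

/-- The Dirichlet form `D(f) = ∫_0^D e^{C} f'^2 dx`. -/
def Dform (a b : ℝ → ℝ) (D : ℝ≥0∞) (f : ℝ → ℝ) : ℝ≥0∞ :=
  ∫⁻ x in ooI D, ENNReal.ofReal (Real.exp (Cf a b x) * deriv f x ^ 2)

/-- `μ(f²)`. -/
def muL2 (a b : ℝ → ℝ) (D : ℝ≥0∞) (f : ℝ → ℝ) : ℝ≥0∞ :=
  ∫⁻ x, ENNReal.ofReal (f x ^ 2) ∂(muM a b D)

/-- The ND (Neumann at `0`, Dirichlet at `D`) principal eigenvalue `λ₀`, defined with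
compactly supported test functions. -/
def lam0 (a b : ℝ → ℝ) (D : ℝ≥0∞) : ℝ≥0∞ :=
  sInf {r | ∃ f : ℝ → ℝ, C1C D f ∧
    (∃ p : ℝ, 0 ≤ p ∧ ENNReal.ofReal p < D ∧ ∀ x, p < x → f x = 0) ∧
    (D ≠ ∞ → f D.toReal = 0) ∧ muL2 a b D f = 1 ∧ r = Dform a b D f}

/-- The DN (Dirichlet at `0`, Neumann at `D`) principal eigenvalue:
`λ₀ = inf { D(f)/μ(f²) : f ∈ C¹(0,D) ∩ C[0,D], D(f) < ∞, f(0) = 0, f ≠ 0 }`. -/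
def lam0DN (a b : ℝ → ℝ) (D : ℝ≥0∞) : ℝ≥0∞ :=
  sInf {r | ∃ f : ℝ → ℝ, C1C D f ∧ Dform a b D f ≠ ∞ ∧ f 0 = 0 ∧
    (¬∀ x ∈ ccI D, f x = 0) ∧ r = Dform a b D f / muL2 a b D f}

/-- The DN single-integral operator `I(f)(x) = (e^{-C(x)}/f'(x)) ∫_x^D f dμ`
(valued in `ℝ≥0∞`, with the convention `1/0 = ∞`). -/
def opIdn (a b : ℝ → ℝ) (D : ℝ≥0∞) (f : ℝ → ℝ) (x : ℝ) : ℝ≥0∞ :=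
  ENNReal.ofReal (Real.exp (-Cf a b x)) *
      (∫⁻ u in Set.Ioi x, ENNReal.ofReal (f u) ∂(muM a b D)) /
    ENNReal.ofReal (deriv f x)

/-- The DN double-integral operator
`II(f)(x) = (1/f(x)) ∫_0^x ν(ds) ∫_s^D f dμ`. -/
def opIIdn (a b : ℝ → ℝ) (D : ℝ≥0∞) (f : ℝ → ℝ) (x : ℝ) : ℝ≥0∞ :=
  (∫⁻ s in Set.Ioo 0 x,
      (∫⁻ u in Set.Ioi s, ENNReal.ofReal (f u) ∂(muM a b D)) ∂(nuM a b D)) /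
    ENNReal.ofReal (f x)

/-- The DN constant `δ = sup_{x∈(0,D)} ν(0,x) μ(x,D)`. -/
def deltaDN (a b : ℝ → ℝ) (D : ℝ≥0∞) : ℝ≥0∞ :=
  ⨆ x ∈ ooI D, nuM a b D (Set.Ioo 0 x) * muM a b D (Set.Ioi x)

/-- `φ(x) = ν(0,x)`. -/
def phiDN (a b : ℝ → ℝ) (D : ℝ≥0∞) (x : ℝ) : ℝ≥0∞ := nuM a b D (Set.Ioo 0 x)

/-- `δ₁ = sup_{x∈(0,D)} ( (1/√(φ(x))) ∫_0^x φ^{3/2} dμ + √(φ(x)) ∫_x^D √φ dμ )`. -/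
def delta1DN (a b : ℝ → ℝ) (D : ℝ≥0∞) : ℝ≥0∞ :=
  ⨆ x ∈ ooI D,
    (∫⁻ u in Set.Ioo 0 x, phiDN a b D u ^ (3 / 2 : ℝ) ∂(muM a b D)) /
        phiDN a b D x ^ (1 / 2 : ℝ) +
      phiDN a b D x ^ (1 / 2 : ℝ) *
        ∫⁻ u in Set.Ioi x, phiDN a b D u ^ (1 / 2 : ℝ) ∂(muM a b D)

/-- The alternative expression
`δ₁ = sup_{x∈(0,D)} (1/√(φ(x))) ∫_0^D φ(x∧·) √φ dμ`. -/
def delta1DNalt (a b : ℝ → ℝ) (D : ℝ≥0∞) : ℝ≥0∞ :=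
  ⨆ x ∈ ooI D,
    (∫⁻ u, phiDN a b D (min x u) * phiDN a b D u ^ (1 / 2 : ℝ) ∂(muM a b D)) /
      phiDN a b D x ^ (1 / 2 : ℝ)

/-- `δ₁' = sup_{x∈(0,D)} (1/φ(x)) ∫_0^D φ(·∧x)² dμ`. -/
def delta1DN' (a b : ℝ → ℝ) (D : ℝ≥0∞) : ℝ≥0∞ :=
  ⨆ x ∈ ooI D,
    (∫⁻ u, phiDN a b D (min u x) ^ 2 ∂(muM a b D)) / phiDN a b D x

/-! ### The scale function -/

lemma measurableSet_ooI (D : ℝ≥0∞) : MeasurableSet (ooI D) :=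
  measurableSet_Ioi.inter (measurableSet_lt ENNReal.measurable_ofReal measurable_const)

lemma mem_ooI_of_lt {D : ℝ≥0∞} {x y : ℝ} (hy : y ∈ ooI D) (hx : 0 < x) (hxy : x ≤ y) :
    x ∈ ooI D :=
  ⟨hx, (ENNReal.ofReal_le_ofReal hxy).trans_lt hy.2⟩

lemma exists_gt_mem_ooI {D : ℝ≥0∞} {x : ℝ} (hx : x ∈ ooI D) : ∃ y ∈ ooI D, x < y := by
  obtain ⟨c, h1, h2⟩ := ENNReal.lt_iff_exists_nnreal_btwn.1 hx.2
  have hc : x < c := by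
    by_contra h
    push Not at h
    have := ENNReal.ofReal_le_ofReal h
    rw [ENNReal.ofReal_coe_nnreal] at this
    exact absurd h1 (not_lt.2 this)
  exact ⟨c, ⟨hx.1.trans hc, by rwa [ENNReal.ofReal_coe_nnreal]⟩, hc⟩

section
variable {a b : ℝ → ℝ} {D : ℝ≥0∞}

lemma measurable_Cf (hyp : Hyp a b D) : Measurable (Cf a b) := by
  have : Cf a b = fun x => ∫ u, ({p : ℝ × ℝ | 0 < p.2 ∧ p.2 < p.1}.indicator
      (fun p => b p.2 / a p.2)) (x, u) := by
    funext x
    rw [Cf, ← integral_indicator measurableSet_Ioo]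
    rfl
  rw [this]
  refine (StronglyMeasurable.integral_prod_right (f := fun x u =>
    ({p : ℝ × ℝ | 0 < p.2 ∧ p.2 < p.1}.indicator (fun p => b p.2 / a p.2)) (x, u)) ?_).measurable
  refine Measurable.stronglyMeasurable ?_
  refine Measurable.indicator ?_ ?_
  · exact (hyp.2.1.comp measurable_snd).div (hyp.1.comp measurable_snd)
  · exact (measurableSet_lt measurable_const measurable_snd).inter
      (measurableSet_lt measurable_snd measurable_fst)

/-- Truncating at `y < D` makes `e^{-C}` continuous on the whole line. -/
lemma continuous_exp_Cf (hyp : Hyp a b D) {y : ℝ} (hy : y ∈ ooI D) :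
    Continuous fun t => Real.exp (-Cf a b (min t y)) := by
  have h1 : ContinuousOn (Cf a b) (Icc 0 y) := by
    have := intervalIntegral.continuousOn_primitive (hyp.2.2.2 y hy.1.le hy.2.le).1
    simp only [integral_Ioc_eq_integral_Ioo] at this
    exact this
  have h2 : (fun t => Cf a b (min t y)) = fun t => Cf a b (max 0 (min t y)) := by
    funext t
    rcases le_total 0 (min t y) with h | h
    · rw [max_eq_right h]
    · rw [max_eq_left h, Cf, Cf, Ioo_eq_empty (not_lt.2 h), Ioo_self]
  have h3 : Continuous fun t => Cf a b (min t y) := by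
    rw [h2]
    exact h1.comp_continuous (by fun_prop)
      fun t => ⟨le_max_left _ _, max_le hy.1.le (min_le_right _ _)⟩
  exact Real.continuous_exp.comp h3.neg

/-- The real-valued scale function `Φ(x) = ∫_0^x e^{-C}`. -/
def Phi (a b : ℝ → ℝ) (x : ℝ) : ℝ := ∫ t in (0 : ℝ)..x, Real.exp (-Cf a b t)

lemma Phi_eq_trunc {x y : ℝ} (hy : 0 < y) (hxy : x ≤ y) :
    Phi a b x = ∫ t in (0 : ℝ)..x, Real.exp (-Cf a b (min t y)) := by
  refine intervalIntegral.integral_congr fun t ht => ?_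
  have : t ≤ y := ht.2.trans (max_le hy.le hxy)
  simp only [min_eq_left this]

lemma Phi_hasDerivAt (hyp : Hyp a b D) {x : ℝ} (hx : x ∈ ooI D) :
    HasDerivAt (Phi a b) (Real.exp (-Cf a b x)) x := by
  obtain ⟨y, hy, hxy⟩ := exists_gt_mem_ooI hx
  have h := ((continuous_exp_Cf hyp hy).integral_hasStrictDerivAt 0 x).hasDerivAt
  rw [min_eq_left hxy.le] at h
  refine h.congr_of_eventuallyEq ?_
  filter_upwards [Iio_mem_nhds hxy] with t ht
  exact Phi_eq_trunc hy.1 (le_of_lt ht)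

lemma Phi_continuousOn (hyp : Hyp a b D) {y : ℝ} (hy : y ∈ ooI D) :
    ContinuousOn (Phi a b) (Iic y) := by
  have h : Continuous fun x => ∫ t in (0 : ℝ)..x, Real.exp (-Cf a b (min t y)) :=
    intervalIntegral.continuous_primitive
      (fun _ _ => (continuous_exp_Cf hyp hy).intervalIntegrable _ _) 0
  exact h.continuousOn.congr fun x hx => Phi_eq_trunc hy.1 hx

lemma Phi_zero : Phi a b 0 = 0 := by simp [Phi]

lemma Phi_strictMono (hyp : Hyp a b D) {x y : ℝ} (hxy : x < y) (hy : y ∈ ooI D) :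
    Phi a b x < Phi a b y := by
  have hc := continuous_exp_Cf hyp hy
  rw [Phi_eq_trunc hy.1 hxy.le, Phi_eq_trunc hy.1 le_rfl, ← sub_pos,
    intervalIntegral.integral_interval_sub_left (hc.intervalIntegrable _ _)
      (hc.intervalIntegrable _ _)]
  exact intervalIntegral.intervalIntegral_pos_of_pos (hc.intervalIntegrable _ _)
    (fun _ => Real.exp_pos _) hxy

lemma Phi_pos (hyp : Hyp a b D) {x : ℝ} (hx : x ∈ ooI D) : 0 < Phi a b x := by
  simpa [Phi_zero] using Phi_strictMono hyp hx.1 hx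

lemma setLIntegral_nuM (hyp : Hyp a b D) {κ : ℝ → ℝ≥0∞} {s : Set ℝ}
    (hs : MeasurableSet s) (hsD : s ⊆ ooI D) :
    ∫⁻ x in s, κ x ∂(nuM a b D) = ∫⁻ x in s, ENNReal.ofReal (Real.exp (-Cf a b x)) * κ x := by
  rw [nuM, restrict_withDensity hs, Measure.restrict_restrict hs, inter_eq_left.2 hsD,
    lintegral_withDensity_eq_lintegral_mul_non_measurable]
  · rfl
  · exact (measurable_Cf hyp).neg.exp.ennreal_ofReal
  · exact ae_of_all _ fun _ => ENNReal.ofReal_lt_top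

lemma Ioo_subset_ooI {x y : ℝ} (hx : 0 ≤ x) (hy : y ∈ ooI D) : Ioo x y ⊆ ooI D :=
  fun _ ht => mem_ooI_of_lt hy (hx.trans_lt ht.1) ht.2.le

/-- The fundamental theorem of calculus for an increasing function, in `ℝ≥0∞`. -/
lemma lintegral_deriv_eq {g g' : ℝ → ℝ} {x y : ℝ} (hxy : x ≤ y) (hc : ContinuousOn g (Icc x y))
    (hd : ∀ t ∈ Ioo x y, HasDerivAt g (g' t) t) (hn : ∀ t ∈ Ioo x y, 0 ≤ g' t) :
    ∫⁻ t in Ioo x y, ENNReal.ofReal (g' t) = ENNReal.ofReal (g y - g x) := by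
  have hi := intervalIntegral.integrableOn_deriv_of_nonneg hc hd hn
  rw [← intervalIntegral.integral_eq_sub_of_hasDerivAt_of_le hxy hc hd
    ((intervalIntegrable_iff_integrableOn_Ioc_of_le hxy).2 hi),
    intervalIntegral.integral_of_le hxy, integral_Ioc_eq_integral_Ioo,
    ofReal_integral_eq_lintegral_ofReal (hi.mono_set Ioo_subset_Ioc_self)]
  exact (ae_restrict_iff' measurableSet_Ioo).2 (ae_of_all _ hn)

lemma phiDN_eq (hyp : Hyp a b D) {x : ℝ} (hx : x ∈ ooI D) :
    phiDN a b D x = ENNReal.ofReal (Phi a b x) := by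
  have h := setLIntegral_nuM (κ := fun _ => 1) hyp measurableSet_Ioo
    (Ioo_subset_ooI le_rfl hx)
  rw [setLIntegral_one] at h
  simp only [mul_one] at h
  rw [phiDN, h, lintegral_deriv_eq (g := Phi a b) hx.1.le
    ((Phi_continuousOn hyp hx).mono Icc_subset_Iic_self)
    (fun t ht => Phi_hasDerivAt hyp (Ioo_subset_ooI le_rfl hx ht))
    (fun t _ => (Real.exp_pos _).le), Phi_zero, sub_zero]

lemma phiDN_ne_zero (hyp : Hyp a b D) {x : ℝ} (hx : x ∈ ooI D) : phiDN a b D x ≠ 0 := by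
  rw [phiDN_eq hyp hx]
  exact (ENNReal.ofReal_pos.2 (Phi_pos hyp hx)).ne'

lemma phiDN_ne_top (hyp : Hyp a b D) {x : ℝ} (hx : x ∈ ooI D) : phiDN a b D x ≠ ∞ := by
  rw [phiDN_eq hyp hx]
  exact ENNReal.ofReal_ne_top

lemma phiDN_mono : Monotone (phiDN a b D) :=
  fun _ _ h => measure_mono (Ioo_subset_Ioo_right h)

/-- The chain rule for powers of the scale function:
`∫_x^y φ^{α-1} dν = (φ(y)^α - φ(x)^α) / α`. -/
lemma lintegral_phi_pow (hyp : Hyp a b D) {x y α : ℝ} (hx : 0 ≤ x) (hxy : x < y)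
    (hy : y ∈ ooI D) (hα : α ≠ 0) (h : 0 < x ∨ 0 < α) :
    ∫⁻ s in Ioo x y, phiDN a b D s ^ (α - 1) ∂(nuM a b D) =
      ENNReal.ofReal ((Phi a b y ^ α - Phi a b x ^ α) / α) := by
  have hsub := Ioo_subset_ooI hx hy
  rw [setLIntegral_nuM hyp measurableSet_Ioo hsub]
  have hP : ContinuousOn (Phi a b) (Icc x y) :=
    (Phi_continuousOn hyp hy).mono Icc_subset_Iic_self
  have hc : ContinuousOn (fun t => Phi a b t ^ α / α) (Icc x y) := by
    refine ContinuousOn.div_const (hP.rpow_const fun t ht => ?_) _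
    rcases h with h | h
    · exact Or.inl (Phi_pos hyp (mem_ooI_of_lt hy (h.trans_le ht.1) ht.2)).ne'
    · exact Or.inr h.le
  have := lintegral_deriv_eq (g := fun t => Phi a b t ^ α / α)
    (g' := fun t => Real.exp (-Cf a b t) * Phi a b t ^ (α - 1)) hxy.le hc
    (fun t ht => by
      have h1 := ((Phi_hasDerivAt hyp (hsub ht)).rpow_const (p := α)
        (Or.inl (Phi_pos hyp (hsub ht)).ne')).div_const α
      have h2 : Real.exp (-Cf a b t) * α * Phi a b t ^ (α - 1) / α =
          Real.exp (-Cf a b t) * Phi a b t ^ (α - 1) := by field_simp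
      rwa [h2] at h1)
    (fun t ht => mul_nonneg (Real.exp_pos _).le
      (Real.rpow_nonneg (Phi_pos hyp (hsub ht)).le _))
  rw [← sub_div] at this
  rw [← this]
  refine setLIntegral_congr_fun measurableSet_Ioo fun t ht => ?_
  rw [phiDN_eq hyp (hsub ht), ENNReal.ofReal_rpow_of_pos (Phi_pos hyp (hsub ht)),
    ENNReal.ofReal_mul (Real.exp_pos _).le]

/-! ### Fubini's theorem and comparison of the constants -/

lemma ae_nuM_mem : ∀ᵐ u ∂(nuM a b D), u ∈ ooI D :=
  (withDensity_absolutelyContinuous _ _).ae_le (ae_restrict_mem (measurableSet_ooI D))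

lemma ae_muM_mem : ∀ᵐ u ∂(muM a b D), u ∈ ooI D :=
  (withDensity_absolutelyContinuous _ _).ae_le (ae_restrict_mem (measurableSet_ooI D))

lemma nuM_singleton (x : ℝ) : nuM a b D {x} = 0 :=
  ((withDensity_absolutelyContinuous _ _).trans Measure.restrict_le_self.absolutelyContinuous)
    (by simp)

lemma muM_singleton (x : ℝ) : muM a b D {x} = 0 :=
  ((withDensity_absolutelyContinuous _ _).trans Measure.restrict_le_self.absolutelyContinuous)
    (by simp)

instance : SFinite (nuM a b D) := by unfold nuM; infer_instance

instance : SFinite (muM a b D) := by unfold muM; infer_instance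

lemma Iio_ae_eq_nuM (x : ℝ) : (Iio x : Set ℝ) =ᵐ[nuM a b D] Ioo 0 x := by
  filter_upwards [ae_nuM_mem] with u hu
  exact propext ⟨fun h => ⟨hu.1, h⟩, fun h => h.2⟩

lemma Ici_ae_eq_nuM (x : ℝ) : (Ici x : Set ℝ) =ᵐ[nuM a b D] (Ioi x ∩ ooI D : Set ℝ) := by
  have h0 : ∀ᵐ u ∂(nuM a b D), u ≠ x := measure_eq_zero_iff_ae_notMem.1 (nuM_singleton x)
  filter_upwards [ae_nuM_mem, h0] with u hu hx
  exact propext ⟨fun h => ⟨lt_of_le_of_ne h (Ne.symm hx), hu⟩, fun h => le_of_lt h.1⟩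

lemma Iic_ae_eq_muM (x : ℝ) : (Iic x : Set ℝ) =ᵐ[muM a b D] Ioo 0 x := by
  have h0 : ∀ᵐ u ∂(muM a b D), u ≠ x := measure_eq_zero_iff_ae_notMem.1 (muM_singleton x)
  filter_upwards [ae_muM_mem, h0] with u hu hx
  exact propext ⟨fun h => ⟨hu.1, lt_of_le_of_ne h hx⟩, fun h => le_of_lt h.2⟩

/-- Exchange of the order of integration over the region `0 < s < u < D`. -/
lemma tonelli {κ g : ℝ → ℝ≥0∞} (hκ : Measurable κ) (hg : Measurable g) :
    ∫⁻ u, (∫⁻ s in Ioo 0 u, κ s ∂(nuM a b D)) * g u ∂(muM a b D) =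
      ∫⁻ s, κ s * ∫⁻ u in Ioi s, g u ∂(muM a b D) ∂(nuM a b D) := by
  have hS : MeasurableSet {p : ℝ × ℝ | p.2 < p.1} :=
    measurableSet_lt measurable_snd measurable_fst
  have hm : Measurable (Function.uncurry fun u s : ℝ =>
      {p : ℝ × ℝ | p.2 < p.1}.indicator (fun p => κ p.2 * g p.1) (u, s)) :=
    ((hκ.comp measurable_snd).mul (hg.comp measurable_fst)).indicator hS
  have hL : ∀ u, (∫⁻ s in Ioo 0 u, κ s ∂(nuM a b D)) * g u = ∫⁻ s,
      {p : ℝ × ℝ | p.2 < p.1}.indicator (fun p => κ p.2 * g p.1) (u, s) ∂(nuM a b D) := by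
    intro u
    rw [← setLIntegral_congr (Iio_ae_eq_nuM u), ← lintegral_mul_const _ hκ,
      ← lintegral_indicator measurableSet_Iio]
    rfl
  have hR : ∀ s, κ s * ∫⁻ u in Ioi s, g u ∂(muM a b D) = ∫⁻ u,
      {p : ℝ × ℝ | p.2 < p.1}.indicator (fun p => κ p.2 * g p.1) (u, s) ∂(muM a b D) := by
    intro s
    rw [← lintegral_const_mul _ hg, ← lintegral_indicator measurableSet_Ioi]
    rfl
  simp only [hL, hR]
  exact lintegral_lintegral_swap hm.aemeasurable

lemma setLIntegral_Iio_indicator {κ : ℝ → ℝ≥0∞} (u x : ℝ) :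
    ∫⁻ s in Ioo 0 u, (Iio x).indicator κ s ∂(nuM a b D) =
      ∫⁻ s in Ioo 0 (min u x), κ s ∂(nuM a b D) := by
  rw [setLIntegral_indicator measurableSet_Iio, inter_comm]
  congr 2
  ext t
  simp [and_assoc]

lemma measurable_phiDN : Measurable (phiDN a b D) := phiDN_mono.measurable

lemma min_mem_ooI {u x : ℝ} (hu : u ∈ ooI D) (hx : x ∈ ooI D) : min u x ∈ ooI D :=
  mem_ooI_of_lt hu (lt_min hu.1 hx.1) (min_le_left _ _)

lemma muM_Ioi_le (hyp : Hyp a b D) {s : ℝ} (hs : s ∈ ooI D) :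
    muM a b D (Ioi s) ≤ deltaDN a b D * (phiDN a b D s)⁻¹ := by
  rw [← div_eq_mul_inv, ENNReal.le_div_iff_mul_le (Or.inl (phiDN_ne_zero hyp hs))
    (Or.inl (phiDN_ne_top hyp hs)), mul_comm]
  exact le_iSup₂ (f := fun x (_ : x ∈ ooI D) => nuM a b D (Ioo 0 x) * muM a b D (Ioi x)) s hs

lemma delta_le_delta1' (hyp : Hyp a b D) : deltaDN a b D ≤ delta1DN' a b D := by
  refine iSup₂_mono fun x hx => ?_
  rw [ENNReal.le_div_iff_mul_le (Or.inl (phiDN_ne_zero hyp hx)) (Or.inl (phiDN_ne_top hyp hx))]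
  calc nuM a b D (Ioo 0 x) * muM a b D (Ioi x) * phiDN a b D x
      = ∫⁻ u in Ioi x, phiDN a b D x ^ 2 ∂(muM a b D) := by
        rw [setLIntegral_const, ← phiDN]; ring
    _ ≤ ∫⁻ u in Ioi x, phiDN a b D (min u x) ^ 2 ∂(muM a b D) := by
        refine setLIntegral_mono' measurableSet_Ioi fun u hu => ?_
        rw [min_eq_right (le_of_lt hu)]
    _ ≤ _ := setLIntegral_le_lintegral _ _

lemma phi_sq (hyp : Hyp a b D) {x : ℝ} (hx : x ∈ ooI D) :
    ∫⁻ s in Ioo 0 x, 2 * phiDN a b D s ∂(nuM a b D) = phiDN a b D x ^ 2 := by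
  have h := lintegral_phi_pow hyp (α := 2) le_rfl hx.1 hx two_ne_zero (Or.inr two_pos)
  have e : (2 : ℝ) - 1 = 1 := by norm_num
  simp only [e, ENNReal.rpow_one, Phi_zero, Real.rpow_two] at h
  rw [lintegral_const_mul _ measurable_phiDN, h, phiDN_eq hyp hx,
    ← ENNReal.ofReal_pow (Phi_pos hyp hx).le, ← ENNReal.ofReal_ofNat,
    ← ENNReal.ofReal_mul (by norm_num)]
  congr 1
  ring

lemma delta1'_le (hyp : Hyp a b D) : delta1DN' a b D ≤ 2 * deltaDN a b D := by
  refine iSup₂_le fun x hx => ?_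
  rw [ENNReal.div_le_iff (phiDN_ne_zero hyp hx) (phiDN_ne_top hyp hx)]
  calc ∫⁻ u, phiDN a b D (min u x) ^ 2 ∂(muM a b D)
      = ∫⁻ u, (∫⁻ s in Ioo 0 u, (Iio x).indicator (fun s => 2 * phiDN a b D s) s ∂(nuM a b D))
          * 1 ∂(muM a b D) := by
        refine lintegral_congr_ae ?_
        filter_upwards [ae_muM_mem] with u hu
        rw [setLIntegral_Iio_indicator, phi_sq hyp (min_mem_ooI hu hx), mul_one]
    _ = ∫⁻ s, (Iio x).indicator (fun s => 2 * phiDN a b D s) s *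
          ∫⁻ u in Ioi s, 1 ∂(muM a b D) ∂(nuM a b D) :=
        tonelli ((measurable_phiDN.const_mul _).indicator measurableSet_Iio) measurable_const
    _ ≤ ∫⁻ s, (Iio x).indicator (fun _ => 2 * deltaDN a b D) s ∂(nuM a b D) := by
        refine lintegral_mono_ae ?_
        filter_upwards [ae_nuM_mem] with s hs
        by_cases h : s ∈ Iio x
        · rw [indicator_of_mem h, indicator_of_mem h, setLIntegral_one, mul_assoc]
          gcongr
          exact le_iSup₂ (f := fun x (_ : x ∈ ooI D) =>
            nuM a b D (Ioo 0 x) * muM a b D (Ioi x)) s hs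
        · simp [indicator_of_notMem h]
    _ = 2 * deltaDN a b D * phiDN a b D x := by
        rw [lintegral_indicator measurableSet_Iio, setLIntegral_congr (Iio_ae_eq_nuM x),
          setLIntegral_const, phiDN]

lemma delta1_eq_alt (hyp : Hyp a b D) : delta1DN a b D = delta1DNalt a b D := by
  refine iSup_congr fun x => iSup_congr fun hx => ?_
  have h0 := phiDN_ne_zero hyp hx
  have h1 := phiDN_ne_top hyp hx
  have hs0 : phiDN a b D x ^ (1 / 2 : ℝ) ≠ 0 := by simp [h0, h1]
  have hs1 : phiDN a b D x ^ (1 / 2 : ℝ) ≠ ∞ := by simp [h1]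
  have hm : Measurable fun u => phiDN a b D u ^ (1 / 2 : ℝ) := measurable_phiDN.pow_const _
  have hL : ∫⁻ u in Iic x, phiDN a b D (min x u) * phiDN a b D u ^ (1 / 2 : ℝ) ∂(muM a b D) =
      ∫⁻ u in Ioo 0 x, phiDN a b D u ^ (3 / 2 : ℝ) ∂(muM a b D) := by
    rw [setLIntegral_congr (Iic_ae_eq_muM x)]
    refine setLIntegral_congr_fun measurableSet_Ioo fun u hu => ?_
    have hu' := Ioo_subset_ooI le_rfl hx hu
    have e : (3 / 2 : ℝ) = 1 + 1 / 2 := by norm_num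
    simp only [min_eq_right hu.2.le]
    rw [e, ENNReal.rpow_add _ _ (phiDN_ne_zero hyp hu') (phiDN_ne_top hyp hu'),
      ENNReal.rpow_one]
  have hR : ∫⁻ u in Ioi x, phiDN a b D (min x u) * phiDN a b D u ^ (1 / 2 : ℝ) ∂(muM a b D) =
      phiDN a b D x * ∫⁻ u in Ioi x, phiDN a b D u ^ (1 / 2 : ℝ) ∂(muM a b D) := by
    rw [← lintegral_const_mul _ hm]
    refine setLIntegral_congr_fun measurableSet_Ioi fun u hu => ?_
    simp only [min_eq_left (le_of_lt (mem_Ioi.1 hu))]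
  rw [← lintegral_add_compl (fun u => phiDN a b D (min x u) * phiDN a b D u ^ (1 / 2 : ℝ))
    (measurableSet_Iic (a := x)), compl_Iic, hL, hR,
    ENNReal.add_div]
  congr 1
  rw [ENNReal.mul_div_right_comm]
  congr 1
  rw [ENNReal.eq_div_iff hs0 hs1, ← ENNReal.rpow_add _ _ h0 h1]
  norm_num

/-- `∫_x^D φ^{-3/2} dν ≤ 2 φ(x)^{-1/2}`. -/
lemma lintegral_phi_tail (hyp : Hyp a b D) {x : ℝ} (hx : x ∈ ooI D) :
    ∫⁻ s in Ici x, phiDN a b D s ^ (-3 / 2 : ℝ) ∂(nuM a b D) ≤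
      2 * phiDN a b D x ^ (-1 / 2 : ℝ) := by
  have hU : (Ioi x ∩ ooI D : Set ℝ) = ⋃ q : {q : ℚ // (q : ℝ) ∈ ooI D}, Ioo x (q : ℝ) := by
    ext t
    simp only [mem_inter_iff, mem_Ioi, mem_iUnion, mem_Ioo]
    constructor
    · rintro ⟨h1, h2⟩
      obtain ⟨y, hy, hty⟩ := exists_gt_mem_ooI h2
      obtain ⟨q, hq1, hq2⟩ := exists_rat_btwn hty
      exact ⟨⟨q, mem_ooI_of_lt hy (h2.1.trans hq1) hq2.le⟩, h1, hq1⟩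
    · rintro ⟨q, h1, h2⟩
      exact ⟨h1, mem_ooI_of_lt q.2 (hx.1.trans h1) h2.le⟩
  have hdir : Directed (· ⊆ ·) fun q : {q : ℚ // (q : ℝ) ∈ ooI D} => Ioo x (q : ℝ) := by
    refine Monotone.directed_le fun p q hpq => Ioo_subset_Ioo_right ?_
    have : (p : ℚ) ≤ q := hpq
    exact_mod_cast this
  rw [setLIntegral_congr (Ici_ae_eq_nuM x), hU, setLIntegral_iUnion_of_directed _ hdir]
  refine iSup_le fun q => ?_
  rcases le_or_gt (q : ℝ) x with h | h
  · simp [Ioo_eq_empty (not_lt.2 h)]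
  have hk := lintegral_phi_pow hyp (α := -1 / 2) hx.1.le h q.2 (by norm_num) (Or.inl hx.1)
  have e : (-1 / 2 : ℝ) - 1 = -3 / 2 := by norm_num
  rw [e] at hk
  rw [hk, phiDN_eq hyp hx, ENNReal.ofReal_rpow_of_pos (Phi_pos hyp hx), ← ENNReal.ofReal_ofNat,
    ← ENNReal.ofReal_mul (by norm_num)]
  refine ENNReal.ofReal_le_ofReal ?_
  have := Real.rpow_nonneg (Phi_pos hyp q.2).le (-1 / 2)
  linarith

lemma lintegral_phi_head (hyp : Hyp a b D) {x : ℝ} (hx : x ∈ ooI D) :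
    ∫⁻ s in Iio x, phiDN a b D s ^ (-1 / 2 : ℝ) ∂(nuM a b D) =
      2 * phiDN a b D x ^ (1 / 2 : ℝ) := by
  have hk := lintegral_phi_pow hyp (α := 1 / 2) le_rfl hx.1 hx (by norm_num)
    (Or.inr (by norm_num))
  have e : (1 / 2 : ℝ) - 1 = -1 / 2 := by norm_num
  rw [e, Phi_zero, Real.zero_rpow (by norm_num)] at hk
  rw [setLIntegral_congr (Iio_ae_eq_nuM x), hk, phiDN_eq hyp hx,
    ENNReal.ofReal_rpow_of_pos (Phi_pos hyp hx), ← ENNReal.ofReal_ofNat,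
    ← ENNReal.ofReal_mul (by norm_num)]
  congr 1
  ring

/-- The derivative, with respect to `ν`, of `u ↦ φ(x ∧ u) √φ(u)`. -/
def kap (a b : ℝ → ℝ) (D : ℝ≥0∞) (x : ℝ) : ℝ → ℝ≥0∞ :=
  (Iio x).piecewise (fun s => ENNReal.ofReal (3 / 2) * phiDN a b D s ^ (1 / 2 : ℝ))
    fun s => phiDN a b D x * ENNReal.ofReal (1 / 2) * phiDN a b D s ^ (-1 / 2 : ℝ)

lemma measurable_kap (x : ℝ) : Measurable (kap a b D x) :=
  Measurable.piecewise measurableSet_Iio ((measurable_phiDN.pow_const _).const_mul _)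
    ((measurable_phiDN.pow_const _).const_mul _)

lemma lintegral_kap_head (hyp : Hyp a b D) {x u : ℝ} (hu : u ∈ ooI D) (hux : u ≤ x) :
    ∫⁻ s in Ioo 0 u, kap a b D x s ∂(nuM a b D) = ENNReal.ofReal (Phi a b u ^ (3 / 2 : ℝ)) := by
  have hk := lintegral_phi_pow hyp (α := 3 / 2) le_rfl hu.1 hu (by norm_num)
    (Or.inr (by norm_num))
  have e : (3 / 2 : ℝ) - 1 = 1 / 2 := by norm_num
  rw [e, Phi_zero, Real.zero_rpow (by norm_num)] at hk
  have : ∫⁻ s in Ioo 0 u, kap a b D x s ∂(nuM a b D) = ∫⁻ s in Ioo 0 u,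
      ENNReal.ofReal (3 / 2) * phiDN a b D s ^ (1 / 2 : ℝ) ∂(nuM a b D) :=
    setLIntegral_congr_fun measurableSet_Ioo fun s hs =>
      piecewise_eq_of_mem _ _ _ (hs.2.trans_le hux)
  rw [this, lintegral_const_mul _ (measurable_phiDN.pow_const _), hk,
    ← ENNReal.ofReal_mul (by norm_num)]
  congr 1
  ring

lemma le_lintegral_kap (hyp : Hyp a b D) {x u : ℝ} (hx : x ∈ ooI D) (hu : u ∈ ooI D) :
    phiDN a b D (min x u) * phiDN a b D u ^ (1 / 2 : ℝ) ≤
      ∫⁻ s in Ioo 0 u, kap a b D x s ∂(nuM a b D) := by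
  have key : ∀ t : ℝ, 0 < t → t ^ (3 / 2 : ℝ) = t * t ^ (1 / 2 : ℝ) := by
    intro t ht
    rw [← Real.rpow_one_add' ht.le (by norm_num)]
    norm_num
  have hPu := Phi_pos hyp hu
  have hPx := Phi_pos hyp hx
  rw [phiDN_eq hyp hu, ENNReal.ofReal_rpow_of_pos hPu]
  rcases le_or_gt u x with h | h
  · rw [min_eq_right h, lintegral_kap_head hyp hu h, phiDN_eq hyp hu,
      ← ENNReal.ofReal_mul hPu.le, key _ hPu]
  · have hsplit : Ioo 0 x ∪ Ioo x u ⊆ Ioo 0 u :=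
      union_subset (Ioo_subset_Ioo_right h.le) (Ioo_subset_Ioo_left hx.1.le)
    have hdisj : Disjoint (Ioo 0 x) (Ioo x u) :=
      Set.disjoint_left.2 fun t h1 h2 => lt_asymm h1.2 h2.1
    refine le_trans ?_ (lintegral_mono_set hsplit)
    rw [lintegral_union measurableSet_Ioo hdisj, lintegral_kap_head hyp hx le_rfl]
    have hk := lintegral_phi_pow hyp (α := 1 / 2) hx.1.le h hu (by norm_num) (Or.inl hx.1)
    have e : (1 / 2 : ℝ) - 1 = -1 / 2 := by norm_num
    rw [e] at hk
    have : ∫⁻ s in Ioo x u, kap a b D x s ∂(nuM a b D) = ∫⁻ s in Ioo x u,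
        phiDN a b D x * ENNReal.ofReal (1 / 2) * phiDN a b D s ^ (-1 / 2 : ℝ) ∂(nuM a b D) :=
      setLIntegral_congr_fun measurableSet_Ioo fun s hs =>
        piecewise_eq_of_notMem _ _ _ (not_lt.2 hs.1.le)
    have hmono : Phi a b x ^ (1 / 2 : ℝ) ≤ Phi a b u ^ (1 / 2 : ℝ) :=
      Real.rpow_le_rpow hPx.le (Phi_strictMono hyp h hu).le (by norm_num)
    rw [this, lintegral_const_mul _ (measurable_phiDN.pow_const _), hk, min_eq_left h.le,
      phiDN_eq hyp hx, ← ENNReal.ofReal_mul hPx.le, ← ENNReal.ofReal_mul hPx.le,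
      ← ENNReal.ofReal_mul (by positivity),
      ← ENNReal.ofReal_add (by positivity) (mul_nonneg (by positivity)
        (div_nonneg (sub_nonneg.2 hmono) (by norm_num))), key _ hPx]
    refine ENNReal.ofReal_le_ofReal (le_of_eq ?_)
    ring

lemma delta1_le (hyp : Hyp a b D) : delta1DN a b D ≤ 4 * deltaDN a b D := by
  rw [delta1_eq_alt hyp]
  refine iSup₂_le fun x hx => ?_
  have h0 := phiDN_ne_zero hyp hx
  have h1 := phiDN_ne_top hyp hx
  have hs0 : phiDN a b D x ^ (1 / 2 : ℝ) ≠ 0 := by simp [h0, h1]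
  have hs1 : phiDN a b D x ^ (1 / 2 : ℝ) ≠ ∞ := by simp [h1]
  rw [ENNReal.div_le_iff hs0 hs1]
  set δ := deltaDN a b D with hδ
  have hm : ∀ c : ℝ, Measurable fun s => phiDN a b D s ^ c := fun c => measurable_phiDN.pow_const _
  calc ∫⁻ u, phiDN a b D (min x u) * phiDN a b D u ^ (1 / 2 : ℝ) ∂(muM a b D)
      ≤ ∫⁻ u, (∫⁻ s in Ioo 0 u, kap a b D x s ∂(nuM a b D)) * 1 ∂(muM a b D) := by
        refine lintegral_mono_ae ?_
        filter_upwards [ae_muM_mem] with u hu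
        rw [mul_one]
        exact le_lintegral_kap hyp hx hu
    _ = ∫⁻ s, kap a b D x s * ∫⁻ u in Ioi s, 1 ∂(muM a b D) ∂(nuM a b D) :=
        tonelli (measurable_kap x) measurable_const
    _ = (∫⁻ s in Iio x, kap a b D x s * muM a b D (Ioi s) ∂(nuM a b D)) +
        ∫⁻ s in Ici x, kap a b D x s * muM a b D (Ioi s) ∂(nuM a b D) := by
        simp only [setLIntegral_one]
        rw [← lintegral_add_compl _ (measurableSet_Iio (a := x)), compl_Iio]
    _ ≤ (∫⁻ s in Iio x, (δ * ENNReal.ofReal (3 / 2)) * phiDN a b D s ^ (-1 / 2 : ℝ)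
          ∂(nuM a b D)) +
        ∫⁻ s in Ici x, (δ * (phiDN a b D x * ENNReal.ofReal (1 / 2))) *
          phiDN a b D s ^ (-3 / 2 : ℝ) ∂(nuM a b D) := by
        have aux : ∀ s ∈ ooI D, ∀ c d : ℝ, d = c + -1 → ∀ A : ℝ≥0∞,
            A * phiDN a b D s ^ c * muM a b D (Ioi s) ≤ (δ * A) * phiDN a b D s ^ d := by
          intro s hs c d hd A
          rw [hd, ENNReal.rpow_add _ _ (phiDN_ne_zero hyp hs) (phiDN_ne_top hyp hs),
            ENNReal.rpow_neg_one]
          calc _ ≤ A * phiDN a b D s ^ c * (δ * (phiDN a b D s)⁻¹) := by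
                gcongr; exact muM_Ioi_le hyp hs
            _ = _ := by ring
        refine add_le_add (lintegral_mono_ae ?_) (lintegral_mono_ae ?_)
        · filter_upwards [ae_restrict_mem measurableSet_Iio,
            ae_restrict_of_ae ae_nuM_mem] with s hs hsD
          rw [kap, piecewise_eq_of_mem _ _ _ hs]
          exact aux s hsD _ _ (by norm_num) _
        · filter_upwards [ae_restrict_mem measurableSet_Ici,
            ae_restrict_of_ae ae_nuM_mem] with s hs hsD
          rw [kap, piecewise_eq_of_notMem _ _ _ (notMem_Iio.2 hs)]
          exact aux s hsD _ _ (by norm_num) _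
    _ ≤ (δ * ENNReal.ofReal (3 / 2)) * (2 * phiDN a b D x ^ (1 / 2 : ℝ)) +
        (δ * (phiDN a b D x * ENNReal.ofReal (1 / 2))) * (2 * phiDN a b D x ^ (-1 / 2 : ℝ)) := by
        rw [lintegral_const_mul _ (hm _), lintegral_const_mul _ (hm _), lintegral_phi_head hyp hx]
        gcongr
        exact lintegral_phi_tail hyp hx
    _ = 4 * δ * phiDN a b D x ^ (1 / 2 : ℝ) := by
        have e : phiDN a b D x * phiDN a b D x ^ (-1 / 2 : ℝ) = phiDN a b D x ^ (1 / 2 : ℝ) := by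
          nth_rewrite 1 [← ENNReal.rpow_one (phiDN a b D x)]
          rw [← ENNReal.rpow_add _ _ h0 h1]
          norm_num
        have e3 : ENNReal.ofReal (3 / 2) * 2 = 3 := by
          rw [← ENNReal.ofReal_ofNat 2, ← ENNReal.ofReal_mul (by norm_num)]; norm_num
        have e1 : ENNReal.ofReal (1 / 2) * 2 = 1 := by
          rw [← ENNReal.ofReal_ofNat 2, ← ENNReal.ofReal_mul (by norm_num)]; norm_num
        calc _ = δ * (ENNReal.ofReal (3 / 2) * 2) * phiDN a b D x ^ (1 / 2 : ℝ) +
              δ * (ENNReal.ofReal (1 / 2) * 2) *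
                (phiDN a b D x * phiDN a b D x ^ (-1 / 2 : ℝ)) := by ring
          _ = _ := by rw [e, e3, e1]; ring

/-! ### The lower bound for the eigenvalue -/

lemma muM_Ioi_pos (hyp : Hyp a b D) {x : ℝ} (hx : x ∈ ooI D) : 0 < muM a b D (Ioi x) := by
  refine pos_iff_ne_zero.2 fun h => ?_
  have hmeas : Measurable fun u => ENNReal.ofReal (Real.exp (Cf a b u) / a u) :=
    ((measurable_Cf hyp).exp.div hyp.1).ennreal_ofReal
  rw [muM, withDensity_apply_eq_zero hmeas] at h
  obtain ⟨y, hy, hxy⟩ := exists_gt_mem_ooI hx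
  have hsub : Ioo x y ⊆ {u | ENNReal.ofReal (Real.exp (Cf a b u) / a u) ≠ 0} ∩ Ioi x := by
    intro u hu
    exact ⟨(ENNReal.ofReal_pos.2 (div_pos (Real.exp_pos _)
      (hyp.2.2.1 u (Ioo_subset_ooI hx.1.le hy hu)))).ne', hu.1⟩
  have h2 := measure_mono_null hsub h
  rw [Measure.restrict_apply measurableSet_Ioo,
    inter_eq_left.2 (Ioo_subset_ooI hx.1.le hy), Real.volume_Ioo] at h2
  exact (ENNReal.ofReal_pos.2 (sub_pos.2 hxy)).ne' h2

/-- `G(s) = ∫_s^D √φ dμ`. -/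
def tailG (a b : ℝ → ℝ) (D : ℝ≥0∞) (s : ℝ) : ℝ≥0∞ :=
  ∫⁻ u in Ioi s, phiDN a b D u ^ (1 / 2 : ℝ) ∂(muM a b D)

lemma measurable_tailG : Measurable (tailG a b D) :=
  Antitone.measurable fun _ _ h => lintegral_mono_set (Ioi_subset_Ioi h)

lemma tailG_ne_top (hyp : Hyp a b D) (hδ : delta1DN a b D ≠ ∞) {s : ℝ} (hs : s ∈ ooI D) :
    tailG a b D s ≠ ∞ := by
  intro h
  apply hδ
  rw [← top_le_iff]
  refine le_trans ?_ (le_iSup₂ (f := fun x (_ : x ∈ ooI D) =>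
    (∫⁻ u in Set.Ioo 0 x, phiDN a b D u ^ (3 / 2 : ℝ) ∂(muM a b D)) /
        phiDN a b D x ^ (1 / 2 : ℝ) + phiDN a b D x ^ (1 / 2 : ℝ) *
        ∫⁻ u in Set.Ioi x, phiDN a b D u ^ (1 / 2 : ℝ) ∂(muM a b D)) s hs)
  have hs0 : phiDN a b D s ^ (1 / 2 : ℝ) ≠ 0 := by
    simp [phiDN_ne_zero hyp hs, phiDN_ne_top hyp hs]
  rw [tailG] at h
  simp only [h, ENNReal.mul_top hs0, add_top, le_refl]

lemma tailG_ne_zero (hyp : Hyp a b D) {s : ℝ} (hs : s ∈ ooI D) : tailG a b D s ≠ 0 := by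
  intro h
  rw [tailG, lintegral_eq_zero_iff (measurable_phiDN.pow_const _)] at h
  have h2 : ∀ᵐ u ∂((muM a b D).restrict (Ioi s)), False := by
    filter_upwards [h, ae_restrict_of_ae ae_muM_mem] with u hu hD
    have : phiDN a b D u ^ (1 / 2 : ℝ) ≠ 0 := by
      simp [phiDN_ne_zero hyp hD, phiDN_ne_top hyp hD]
    exact this hu
  have h3 := ae_iff.1 h2
  simp only [not_false_eq_true, Set.ofPred_true, Measure.restrict_apply_univ] at h3
  exact (muM_Ioi_pos hyp hs).ne' h3

/-- `√φ` is a supersolution with constant `δ₁`: the left side equals `∫ φ(u ∧ ·) √φ dμ`. -/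
lemma lintegral_tailG_le (hyp : Hyp a b D) {u : ℝ} (hu : u ∈ ooI D) :
    ∫⁻ s in Ioo 0 u, tailG a b D s ∂(nuM a b D) ≤
      delta1DN a b D * phiDN a b D u ^ (1 / 2 : ℝ) := by
  have hs0 : phiDN a b D u ^ (1 / 2 : ℝ) ≠ 0 := by
    simp [phiDN_ne_zero hyp hu, phiDN_ne_top hyp hu]
  have hs1 : phiDN a b D u ^ (1 / 2 : ℝ) ≠ ∞ := by simp [phiDN_ne_top hyp hu]
  have h1 := tonelli (a := a) (b := b) (D := D) (κ := (Iio u).indicator fun _ => 1)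
    (g := fun v => phiDN a b D v ^ (1 / 2 : ℝ))
    (measurable_const.indicator measurableSet_Iio) (measurable_phiDN.pow_const _)
  have h2 : ∫⁻ s, (Iio u).indicator (fun _ => (1 : ℝ≥0∞)) s *
      ∫⁻ v in Ioi s, phiDN a b D v ^ (1 / 2 : ℝ) ∂(muM a b D) ∂(nuM a b D) =
      ∫⁻ s in Ioo 0 u, tailG a b D s ∂(nuM a b D) := by
    rw [← setLIntegral_congr (Iio_ae_eq_nuM u), ← lintegral_indicator measurableSet_Iio]
    refine lintegral_congr fun s => ?_
    by_cases h : s ∈ Iio u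
    · simp [indicator_of_mem h, tailG]
    · simp [indicator_of_notMem h]
  rw [← h2, ← h1, ← ENNReal.div_le_iff hs0 hs1, delta1_eq_alt hyp]
  refine le_trans (le_of_eq ?_) (le_iSup₂ (f := fun x (_ : x ∈ ooI D) =>
    (∫⁻ u, phiDN a b D (min x u) * phiDN a b D u ^ (1 / 2 : ℝ) ∂(muM a b D)) /
      phiDN a b D x ^ (1 / 2 : ℝ)) u hu)
  congr 2
  funext v
  rw [setLIntegral_Iio_indicator, setLIntegral_one, min_comm, ← phiDN]

/-- The Cauchy–Schwarz inequality with a weight. -/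
lemma sq_lintegral_le {m : Measure ℝ} {F G : ℝ → ℝ≥0∞} (hF : Measurable F) (hG : Measurable G)
    (h : ∀ᵐ s ∂m, G s ≠ 0 ∧ G s ≠ ∞) :
    (∫⁻ s, F s ∂m) ^ 2 ≤ (∫⁻ s, F s ^ 2 / G s ∂m) * ∫⁻ s, G s ∂m := by
  have hH := ENNReal.lintegral_mul_le_Lp_mul_Lq m Real.HolderConjugate.two_two
    (f := fun s => F s * G s ^ (-(1 / 2) : ℝ)) (g := fun s => G s ^ (1 / 2 : ℝ))
    (hF.mul (hG.pow_const _)).aemeasurable (hG.pow_const _).aemeasurable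
  have e0 : ∫⁻ s, ((fun s => F s * G s ^ (-(1 / 2) : ℝ)) * fun s => G s ^ (1 / 2 : ℝ)) s ∂m =
      ∫⁻ s, F s ∂m := by
    refine lintegral_congr_ae ?_
    filter_upwards [h] with s hs
    simp only [Pi.mul_apply]
    rw [mul_assoc, ← ENNReal.rpow_add _ _ hs.1 hs.2]
    simp
  have e1 : ∀ s, (F s * G s ^ (-(1 / 2) : ℝ)) ^ (2 : ℝ) = F s ^ 2 / G s := by
    intro s
    have e : (-(1 / 2) : ℝ) * 2 = -1 := by norm_num
    rw [ENNReal.mul_rpow_of_nonneg _ _ two_pos.le, ← ENNReal.rpow_mul, e, div_eq_mul_inv,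
      ← ENNReal.rpow_neg_one, ENNReal.rpow_two]
  have e2 : ∀ s, (G s ^ (1 / 2 : ℝ)) ^ (2 : ℝ) = G s := by
    intro s
    rw [← ENNReal.rpow_mul]
    norm_num
  simp only [e1, e2] at hH
  rw [e0] at hH
  calc _ ≤ ((∫⁻ s, F s ^ 2 / G s ∂m) ^ (1 / 2 : ℝ) * (∫⁻ s, G s ∂m) ^ (1 / 2 : ℝ)) ^ 2 := by
        gcongr
    _ = _ := by
        rw [← ENNReal.rpow_two, ENNReal.mul_rpow_of_nonneg _ _ two_pos.le, ← ENNReal.rpow_mul,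
          ← ENNReal.rpow_mul]
        norm_num

lemma enorm_le_lintegral_deriv {f : ℝ → ℝ} (hf : C1C D f) (h0 : f 0 = 0) {u : ℝ}
    (hu : u ∈ ccI D) : ‖f u‖ₑ ≤ ∫⁻ s in Ioo 0 u, ‖deriv f s‖ₑ := by
  by_cases hT : ∫⁻ s in Ioo 0 u, ‖deriv f s‖ₑ = ∞
  · rw [hT]; exact le_top
  have hi : IntegrableOn (deriv f) (Ioo 0 u) :=
    ⟨(measurable_deriv f).aestronglyMeasurable, lt_top_iff_ne_top.2 hT⟩
  have hI : IntervalIntegrable (deriv f) volume 0 u :=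
    (intervalIntegrable_iff_integrableOn_Ioo_of_le hu.1).2 hi
  have := intervalIntegral.integral_eq_sub_of_hasDerivAt_of_le hu.1
    (hf.1.mono fun t ht => ⟨ht.1, (ENNReal.ofReal_le_ofReal ht.2).trans hu.2⟩)
    (fun t ht => (hf.2.1 t ⟨ht.1, ((ENNReal.ofReal_lt_ofReal_iff (ht.1.trans ht.2)).2
      ht.2).trans_le hu.2⟩).hasDerivAt) hI
  rw [h0, sub_zero, intervalIntegral.integral_of_le hu.1, integral_Ioc_eq_integral_Ioo] at this
  rw [← this]
  exact enorm_integral_le_lintegral_enorm _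

/-- This rules out the junk quotient `0 / 0` in the definition of `λ₀`. -/
lemma Dform_ne_zero (hyp : Hyp a b D) {f : ℝ → ℝ} (hf : C1C D f) (h0 : f 0 = 0)
    (hne : ¬∀ x ∈ ccI D, f x = 0) : Dform a b D f ≠ 0 := by
  intro h
  refine hne fun u hu => ?_
  have hmeas : Measurable fun x => ENNReal.ofReal (Real.exp (Cf a b x) * deriv f x ^ 2) :=
    ((measurable_Cf hyp).exp.mul ((measurable_deriv f).pow_const 2)).ennreal_ofReal
  rw [Dform, lintegral_eq_zero_iff hmeas] at h
  have hsub : Ioo 0 u ⊆ ooI D := fun t ht =>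
    ⟨ht.1, ((ENNReal.ofReal_lt_ofReal_iff (ht.1.trans ht.2)).2 ht.2).trans_le hu.2⟩
  have hz : ∫⁻ s in Ioo 0 u, ‖deriv f s‖ₑ = 0 := by
    rw [lintegral_eq_zero_iff (measurable_deriv f).enorm]
    filter_upwards [ae_restrict_of_ae_restrict_of_subset hsub h] with s hs
    have h1 : Real.exp (Cf a b s) * deriv f s ^ 2 ≤ 0 := ENNReal.ofReal_eq_zero.1 hs
    have h2 : deriv f s ^ 2 ≤ 0 := nonpos_of_mul_nonpos_right h1 (Real.exp_pos _)
    have h3 : deriv f s = 0 := by nlinarith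
    simp [h3]
  have := enorm_le_lintegral_deriv hf h0 hu
  rw [hz] at this
  simpa using this

/-- The weighted Hardy inequality `μ(f²) ≤ δ₁ D(f)`. -/
lemma muL2_le (hyp : Hyp a b D) (hδ : delta1DN a b D ≠ ∞) {f : ℝ → ℝ} (hf : C1C D f)
    (h0 : f 0 = 0) : muL2 a b D f ≤ delta1DN a b D * Dform a b D f := by
  -- The absolute value of the derivative of `f` with respect to `ν`.
  set F : ℝ → ℝ≥0∞ := fun s => ENNReal.ofReal (Real.exp (Cf a b s)) * ‖deriv f s‖ₑ with hFdef
  have hF : Measurable F :=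
    (measurable_Cf hyp).exp.ennreal_ofReal.mul (measurable_deriv f).enorm
  set G := tailG a b D with hGdef
  have hG : Measurable G := measurable_tailG
  set h : ℝ → ℝ≥0∞ := fun u => ∫⁻ s in Ioo 0 u, G s ∂(nuM a b D) with hhdef
  have hh : Measurable h :=
    Monotone.measurable fun _ _ hst => lintegral_mono_set (Ioo_subset_Ioo_right hst)
  have hDf : Dform a b D f = ∫⁻ s, F s ^ 2 ∂(nuM a b D) := by
    rw [← Measure.restrict_eq_self_of_ae_mem (ae_nuM_mem (a := a) (b := b) (D := D)),
      setLIntegral_nuM hyp (measurableSet_ooI D) subset_rfl, Dform]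
    refine lintegral_congr fun s => ?_
    simp only [hFdef]
    rw [Real.enorm_eq_ofReal_abs, ← ENNReal.ofReal_mul (Real.exp_pos _).le,
      ← ENNReal.ofReal_pow (by positivity), ← ENNReal.ofReal_mul (Real.exp_pos _).le,
      mul_pow, sq_abs, Real.exp_neg]
    congr 1
    field_simp
  have hpt : ∀ u ∈ ooI D, ENNReal.ofReal (f u ^ 2) ≤
      (∫⁻ s in Ioo 0 u, F s ^ 2 / G s ∂(nuM a b D)) * h u := by
    intro u hu
    have h1 := enorm_le_lintegral_deriv hf h0 (u := u) ⟨hu.1.le, hu.2.le⟩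
    have h2 : ∫⁻ s in Ioo 0 u, ‖deriv f s‖ₑ = ∫⁻ s in Ioo 0 u, F s ∂(nuM a b D) := by
      rw [setLIntegral_nuM hyp measurableSet_Ioo (Ioo_subset_ooI le_rfl hu)]
      refine lintegral_congr fun s => ?_
      simp only [hFdef]
      rw [← mul_assoc, ← ENNReal.ofReal_mul (Real.exp_pos _).le, ← Real.exp_add]
      simp
    rw [h2] at h1
    calc ENNReal.ofReal (f u ^ 2) = ‖f u‖ₑ ^ 2 := by
          rw [Real.enorm_eq_ofReal_abs, ← ENNReal.ofReal_pow (abs_nonneg _), sq_abs]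
      _ ≤ (∫⁻ s in Ioo 0 u, F s ∂(nuM a b D)) ^ 2 := by gcongr
      _ ≤ _ := by
          refine sq_lintegral_le hF hG ?_
          filter_upwards [ae_restrict_of_ae ae_nuM_mem] with s hs
          exact ⟨tailG_ne_zero hyp hs, tailG_ne_top hyp hδ hs⟩
  calc muL2 a b D f
      ≤ ∫⁻ u, (∫⁻ s in Ioo 0 u, F s ^ 2 / G s ∂(nuM a b D)) * h u ∂(muM a b D) := by
        refine lintegral_mono_ae ?_
        filter_upwards [ae_muM_mem] with u hu using hpt u hu
    _ = ∫⁻ s, F s ^ 2 / G s * ∫⁻ u in Ioi s, h u ∂(muM a b D) ∂(nuM a b D) :=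
        tonelli ((hF.pow_const 2).div hG) hh
    _ ≤ ∫⁻ s, delta1DN a b D * F s ^ 2 ∂(nuM a b D) := by
        refine lintegral_mono_ae ?_
        filter_upwards [ae_nuM_mem] with s hs
        have hle : ∫⁻ u in Ioi s, h u ∂(muM a b D) ≤ delta1DN a b D * G s := by
          rw [hGdef, tailG, ← lintegral_const_mul _ (measurable_phiDN.pow_const _)]
          refine lintegral_mono_ae ?_
          filter_upwards [ae_restrict_of_ae ae_muM_mem] with u hu
          exact lintegral_tailG_le hyp hu
        calc _ ≤ F s ^ 2 / G s * (delta1DN a b D * G s) := by gcongr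
          _ = delta1DN a b D * (F s ^ 2 / G s * G s) := by ring
          _ = _ := by
            rw [ENNReal.div_mul_cancel (tailG_ne_zero hyp hs) (tailG_ne_top hyp hδ hs)]
    _ = _ := by rw [lintegral_const_mul _ (hF.pow_const 2), hDf]

lemma inv_delta1_le (hyp : Hyp a b D) (hδ : delta1DN a b D ≠ ∞) :
    (delta1DN a b D)⁻¹ ≤ lam0DN a b D := by
  refine le_sInf ?_
  rintro r ⟨f, hf, hD, h0, hne, rfl⟩
  rw [ENNReal.le_div_iff_mul_le (Or.inr (Dform_ne_zero hyp hf h0 hne)) (Or.inr hD), mul_comm,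
    ← div_eq_mul_inv]
  exact ENNReal.div_le_of_le_mul' (muL2_le hyp hδ hf h0)

/-! ### The upper bound for the eigenvalue -/

/-- A continuous cutoff equal to `1` on `(-∞, x]` and to `0` on `[y, ∞)`. -/
def cutoff (x y t : ℝ) : ℝ := max 0 (min 1 ((y - t) / (y - x)))

lemma cutoff_nonneg (x y t : ℝ) : 0 ≤ cutoff x y t := le_max_left _ _

lemma cutoff_le_one (x y t : ℝ) : cutoff x y t ≤ 1 := max_le zero_le_one (min_le_left _ _)

lemma cutoff_of_le {x y t : ℝ} (hxy : x < y) (h : t ≤ x) : cutoff x y t = 1 := by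
  have : 1 ≤ (y - t) / (y - x) := (one_le_div (sub_pos.2 hxy)).2 (by linarith)
  rw [cutoff, min_eq_left this, max_eq_right zero_le_one]

lemma cutoff_of_ge {x y t : ℝ} (hxy : x < y) (h : y ≤ t) : cutoff x y t = 0 := by
  have : (y - t) / (y - x) ≤ 0 :=
    div_nonpos_of_nonpos_of_nonneg (by linarith) (sub_pos.2 hxy).le
  rw [cutoff, max_eq_left ((min_le_right _ _).trans this)]

lemma continuous_cutoff (x y : ℝ) : Continuous (cutoff x y) := by
  unfold cutoff
  fun_prop

/-- Rayleigh quotient bound from the `C¹` test function `f(u) = ∫_0^u e^{-C} χ`, where `χ` is the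
cutoff between `x` and `y`: `D(f) ≤ φ(y)` and `f ≥ φ(· ∧ x)`. -/
lemma lam_mul_le (hyp : Hyp a b D) {x y : ℝ} (hx : x ∈ ooI D) (hy : y ∈ ooI D) (hxy : x < y) :
    lam0DN a b D * ∫⁻ u, phiDN a b D (min u x) ^ 2 ∂(muM a b D) ≤ phiDN a b D y := by
  set k : ℝ → ℝ := fun t => Real.exp (-Cf a b (min t y)) * cutoff x y t with hk
  have hkc : Continuous k := (continuous_exp_Cf hyp hy).mul (continuous_cutoff x y)
  have hk0 : ∀ t, 0 ≤ k t := fun t => mul_nonneg (Real.exp_pos _).le (cutoff_nonneg _ _ _)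
  set f : ℝ → ℝ := fun u => ∫ t in (0 : ℝ)..u, k t with hf
  have hfd : ∀ u, HasDerivAt f (k u) u := fun u =>
    (hkc.integral_hasStrictDerivAt 0 u).hasDerivAt
  have hderiv : deriv f = k := funext fun u => (hfd u).deriv
  have hfmono : Monotone f := monotone_of_deriv_nonneg (fun u => (hfd u).differentiableAt)
    (by rw [hderiv]; exact hk0)
  have hfC : C1C D f := by
    refine ⟨fun u _ => (hfd u).continuousAt.continuousWithinAt,
      fun u _ => (hfd u).differentiableAt, ?_⟩
    rw [hderiv]
    exact hkc.continuousOn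
  have hfPhi : ∀ u ≤ x, f u = Phi a b u := by
    intro u hu
    refine intervalIntegral.integral_congr fun t ht => ?_
    have htx : t ≤ x := ht.2.trans (max_le hx.1.le hu)
    simp only [hk, cutoff_of_le hxy htx, mul_one, min_eq_left (htx.trans hxy.le)]
  have hDle : Dform a b D f ≤ phiDN a b D y := by
    have hphi : phiDN a b D y =
        ∫⁻ s in ooI D, (Ioo 0 y).indicator (fun s => ENNReal.ofReal (Real.exp (-Cf a b s))) s := by
      have h1 := setLIntegral_nuM (κ := fun _ => 1) hyp measurableSet_Ioo
        (Ioo_subset_ooI le_rfl hy)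
      simp only [setLIntegral_one, mul_one] at h1
      rw [phiDN, h1, setLIntegral_indicator measurableSet_Ioo,
        inter_eq_left.2 (Ioo_subset_ooI le_rfl hy)]
    rw [hphi, Dform, hderiv]
    refine setLIntegral_mono' (measurableSet_ooI D) fun t ht => ?_
    rcases lt_or_ge t y with h | h
    · rw [indicator_of_mem (show t ∈ Ioo 0 y from ⟨ht.1, h⟩)]
      refine ENNReal.ofReal_le_ofReal ?_
      have e : Real.exp (Cf a b t) * k t ^ 2 = Real.exp (-Cf a b t) * cutoff x y t ^ 2 := by
        simp only [hk, min_eq_left h.le, Real.exp_neg]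
        field_simp
      rw [e]
      exact mul_le_of_le_one_right (Real.exp_pos _).le
        (pow_le_one₀ (cutoff_nonneg _ _ _) (cutoff_le_one _ _ _))
    · have : k t = 0 := by simp only [hk, cutoff_of_ge hxy h, mul_zero]
      simp [this]
  have hMle : ∫⁻ u, phiDN a b D (min u x) ^ 2 ∂(muM a b D) ≤ muL2 a b D f := by
    refine lintegral_mono_ae ?_
    filter_upwards [ae_muM_mem] with u hu
    have hm := min_mem_ooI hu hx
    rw [phiDN_eq hyp hm, ← ENNReal.ofReal_pow (Phi_pos hyp hm).le]
    refine ENNReal.ofReal_le_ofReal (pow_le_pow_left₀ (Phi_pos hyp hm).le ?_ 2)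
    rw [← hfPhi _ (min_le_right _ _)]
    exact hfmono (min_le_left _ _)
  have hlam : lam0DN a b D ≤ Dform a b D f / muL2 a b D f := by
    refine sInf_le ⟨f, hfC, (hDle.trans_lt (phiDN_ne_top hyp hy).lt_top).ne, by simp [hf], ?_, rfl⟩
    intro h
    have h1 := h x ⟨hx.1.le, hx.2.le⟩
    rw [hfPhi x le_rfl] at h1
    exact (Phi_pos hyp hx).ne' h1
  calc _ ≤ Dform a b D f / muL2 a b D f * muL2 a b D f := by gcongr
    _ ≤ Dform a b D f := by rw [mul_comm]; exact ENNReal.mul_div_le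
    _ ≤ _ := hDle

lemma lam_le (hyp : Hyp a b D) : lam0DN a b D ≤ (delta1DN' a b D)⁻¹ := by
  rw [delta1DN']
  simp only [ENNReal.inv_iSup]
  refine le_iInf₂ fun x hx => ?_
  have hlim : Tendsto (phiDN a b D) (𝓝[>] x) (𝓝 (phiDN a b D x)) := by
    obtain ⟨y, hy, hxy⟩ := exists_gt_mem_ooI hx
    rw [phiDN_eq hyp hx]
    refine ((ENNReal.tendsto_ofReal (Phi_hasDerivAt hyp hx).continuousAt.tendsto).mono_left
      nhdsWithin_le_nhds).congr' ?_
    filter_upwards [Ioo_mem_nhdsGT hxy] with t ht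
    exact (phiDN_eq hyp (Ioo_subset_ooI hx.1.le hy ht)).symm
  have key : lam0DN a b D * ∫⁻ u, phiDN a b D (min u x) ^ 2 ∂(muM a b D) ≤ phiDN a b D x := by
    obtain ⟨y, hy, hxy⟩ := exists_gt_mem_ooI hx
    refine ge_of_tendsto hlim ?_
    filter_upwards [Ioo_mem_nhdsGT hxy] with t ht
    exact lam_mul_le hyp hx (Ioo_subset_ooI hx.1.le hy ht) ht.1
  rw [ENNReal.inv_div (Or.inl (phiDN_ne_top hyp hx)) (Or.inl (phiDN_ne_zero hyp hx))]
  exact (ENNReal.le_div_iff_mul_le (Or.inr (phiDN_ne_zero hyp hx))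
    (Or.inr (phiDN_ne_top hyp hx))).2 key

end

/-- Corollary 4.4: improved estimates for the DN principal eigenvalue:
`δ⁻¹ ≥ (δ₁')⁻¹ ≥ λ₀ ≥ δ₁⁻¹ ≥ (4δ)⁻¹` together with `δ₁`'s two expressions and
`δ ≤ δ₁' ≤ 2δ`. -/
theorem dn_improved_estimates
    (a b : ℝ → ℝ) (D : ℝ≥0∞) (hD : 0 < D) (hyp : Hyp a b D)
    (hmu : muM a b D Set.univ ≠ ∞) (hdelta : deltaDN a b D < ∞) :
    (delta1DN' a b D)⁻¹ ≤ (deltaDN a b D)⁻¹ ∧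
    lam0DN a b D ≤ (delta1DN' a b D)⁻¹ ∧
    (delta1DN a b D)⁻¹ ≤ lam0DN a b D ∧
    (4 * deltaDN a b D)⁻¹ ≤ (delta1DN a b D)⁻¹ ∧
    delta1DN a b D = delta1DNalt a b D ∧
    deltaDN a b D ≤ delta1DN' a b D ∧ delta1DN' a b D ≤ 2 * deltaDN a b D := by
  have hδ : delta1DN a b D ≠ ∞ := ((delta1_le hyp).trans_lt
    (ENNReal.mul_lt_top (by simp) hdelta)).ne
  exact ⟨ENNReal.inv_le_inv.2 (delta_le_delta1' hyp), lam_le hyp, inv_delta1_le hyp hδ,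
    ENNReal.inv_le_inv.2 (delta1_le hyp), delta1_eq_alt hyp, delta_le_delta1' hyp,
    delta1'_le hyp⟩
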